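/- Let p_D and p_θ be continuously differentiable, strictly positive probability densities on ℝ^d with ½ ∫ p_D(v)‖∇ log p_θ(v) − ∇ log p_D(v)‖₂² dv < ∞. Let F be the class of continuously differentiable f: ℝ^d → ℝ^d such that p_D(v)·f(v) → 0 as ‖v‖ → ∞, ∇·(p_D f) is Lebesgue-integrable, and ∫ p_D‖f‖₂² < ∞, and suppose f* := ∇ log p_θ − ∇ log p_D belongs to F. Then sup_{f ∈ F} ∫ p_D(v) [⟨∇ log p_θ(v), f(v)⟩ + tr(Df(v)) − ½‖f(v)‖₂²] dv = ½ ∫ p_D(v)‖∇ log p_θ(v) − ∇ log p_D(v)‖₂² dv, i.e. the maximum form D_F^m(p_D‖p_θ) equals the Fisher divergence D_F(p_D‖p_θ), and the supremum is attained at f = f*. -/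

import Mathlib

open MeasureTheory Filter Topology
open scoped RealInnerProductSpace

/-- The divergence `∇·f` of a vector field `f : ℝ^d → ℝ^d`, i.e. the trace of its Jacobian. -/
noncomputable def vdiv {d : ℕ} (f : EuclideanSpace ℝ (Fin d) → EuclideanSpace ℝ (Fin d))
    (x : EuclideanSpace ℝ (Fin d)) : ℝ :=
  LinearMap.trace ℝ (EuclideanSpace ℝ (Fin d)) (fderiv ℝ f x).toLinearMap

/-- The class `F` of admissible test functions: `C¹` vector fields `f` with `p_D·f → 0` at
infinity, `∇·(p_D f)` Lebesgue-integrable, and `∫ p_D ‖f‖² < ∞`. -/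
noncomputable def memF {d : ℕ} (pD : EuclideanSpace ℝ (Fin d) → ℝ)
    (f : EuclideanSpace ℝ (Fin d) → EuclideanSpace ℝ (Fin d)) : Prop :=
  ContDiff ℝ 1 f ∧
    Tendsto (fun v => pD v • f v) (cocompact (EuclideanSpace ℝ (Fin d))) (𝓝 0) ∧
    Integrable (vdiv fun v => pD v • f v) ∧ Integrable (fun v => pD v * ‖f v‖ ^ 2)

/-- The objective `J(f) = ∫ p_D(v) [⟨∇ log p_θ(v), f(v)⟩ + tr(Df(v)) − ½‖f(v)‖²] dv`. -/
noncomputable def Jobj {d : ℕ} (pD pθ : EuclideanSpace ℝ (Fin d) → ℝ)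
    (f : EuclideanSpace ℝ (Fin d) → EuclideanSpace ℝ (Fin d)) : ℝ :=
  ∫ v, pD v * (⟪gradient (fun w => Real.log (pθ w)) v, f v⟫ + vdiv f v
    - (1 / 2) * ‖f v‖ ^ 2)

/-!
Integrating by parts, `∫ ∇·(p f) = 0`, and `p ∇ log p = ∇p` turn the unknown score `∇ log p` into
the term `p tr(Df)` of the objective. With `f* = b - ∇ log p`, where `b` is the score of the model,
this leaves `J(f) = ∫ p (⟪f*, f⟫ - ½‖f‖²)`, and completing the square gives
`J(f) = ½ ∫ p ‖f*‖² - ½ ∫ p ‖f* - f‖²`.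

Integrability of `p f`, which follows from `2 p ‖f‖ ≤ p + p ‖f‖²`, is what removes the boundary
term: against the cutoffs `φ(c v)`, `c → 0`, that term is `c ∫ ⟪∇φ(c v), p f⟫`.
-/

section Divergence

variable {E : Type*} [NormedAddCommGroup E] [NormedSpace ℝ E]

/-- The divergence of a vector field on a real normed space, the trace of its derivative. It agrees
definitionally with `vdiv` on `ℝ^d`. -/
noncomputable def divergence (f : E → E) (x : E) : ℝ :=
  LinearMap.trace ℝ E (fderiv ℝ f x).toLinearMap

variable [FiniteDimensional ℝ E]

lemma divergence_smul {p : E → ℝ} {f : E → E} {x : E}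
    (hp : DifferentiableAt ℝ p x) (hf : DifferentiableAt ℝ f x) :
    divergence (fun v => p v • f v) x = p x * divergence f x + fderiv ℝ p x (f x) := by
  simp only [divergence, fderiv_fun_smul hp hf, ContinuousLinearMap.toLinearMap_add,
    ContinuousLinearMap.toLinearMap_smul, map_add, map_smul, smul_eq_mul]
  exact congrArg (p x * divergence f x + ·)
    (LinearMap.trace_smulRight (fderiv ℝ p x).toLinearMap (f x))

variable [MeasurableSpace E] [BorelSpace E] {μ : Measure E} [μ.IsAddHaarMeasure]

lemma integral_fderiv_eq_zero {F : Type*} [NormedAddCommGroup F] [NormedSpace ℝ F]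
    {h : E → F} (hh : Differentiable ℝ h) (hi : Integrable h μ)
    (hi' : Integrable (fderiv ℝ h) μ) : ∫ v, fderiv ℝ h v ∂μ = 0 := by
  ext w
  rw [ContinuousLinearMap.integral_apply hi']
  have parts := integral_smul_fderiv_eq_neg_fderiv_smul_of_integrable (𝕜 := ℝ) (μ := μ)
    (f := fun _ => (1 : ℝ)) (g := h) (v := w) (by simp)
    (by simpa using hi'.apply_continuousLinearMap w) (by simpa using hi)
    (fun _ _ => differentiableAt_const _) (fun x _ => hh x)
  simpa using parts

lemma integral_divergence_eq_zero_of_integrable_fderiv {h : E → E} (hh : Differentiable ℝ h)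
    (hi : Integrable h μ) (hi' : Integrable (fderiv ℝ h) μ) :
    ∫ v, divergence h v ∂μ = 0 := by
  let T : (E →L[ℝ] E) →L[ℝ] ℝ :=
    (LinearMap.trace ℝ E ∘ₗ ContinuousLinearMap.coeLM ℝ).toContinuousLinearMap
  calc ∫ v, divergence h v ∂μ = T (∫ v, fderiv ℝ h v ∂μ) := T.integral_comp_comm hi'
    _ = 0 := by rw [integral_fderiv_eq_zero hh hi hi', map_zero]

lemma integral_divergence_eq_zero_of_hasCompactSupport {h : E → E} (hh : ContDiff ℝ 1 h)
    (hc : HasCompactSupport h) : ∫ v, divergence h v ∂μ = 0 :=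
  integral_divergence_eq_zero_of_integrable_fderiv (hh.differentiable one_ne_zero)
    (hh.continuous.integrable_of_hasCompactSupport hc)
    ((hh.continuous_fderiv one_ne_zero).integrable_of_hasCompactSupport (hc.fderiv (𝕜 := ℝ)))

lemma integral_cutoff_divergence_eq_zero {φ : E → ℝ} (hφ : ContDiff ℝ 1 φ)
    (hφc : HasCompactSupport φ) {g : E → E} (hg : ContDiff ℝ 1 g) {c : ℝ} (hc : c ≠ 0) :
    ∫ v, (φ (c • v) * divergence g v + c * fderiv ℝ φ (c • v) (g v)) ∂μ = 0 := by
  have hφ_smul : ContDiff ℝ 1 fun v => φ (c • v) := hφ.comp (contDiff_const_smul c)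
  rw [← integral_divergence_eq_zero_of_hasCompactSupport (μ := μ) (hφ_smul.smul hg)
    (hφc.comp_smul hc).smul_right]
  refine integral_congr_ae (.of_forall fun v => ?_)
  symm
  change divergence (fun v => φ (c • v) • g v) v = _
  rw [divergence_smul (hφ_smul.differentiable one_ne_zero v) (hg.differentiable one_ne_zero v),
    fderiv_comp_smul (f := φ), smul_apply, smul_eq_mul]

theorem integral_divergence_eq_zero {g : E → E} (hg : ContDiff ℝ 1 g) (hi : Integrable g μ)
    (hdiv : Integrable (divergence g) μ) : ∫ v, divergence g v ∂μ = 0 := by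
  let φ : ContDiffBump (0 : E) := ⟨1, 2, one_pos, one_lt_two⟩
  have hφ : ContDiff ℝ 1 φ := φ.contDiff
  have hφ' : Continuous (fderiv ℝ φ) := hφ.continuous_fderiv one_ne_zero
  obtain ⟨C, hC⟩ := (φ.hasCompactSupport.fderiv (𝕜 := ℝ)).exists_bound_of_continuous hφ'
  let D (c : ℝ) (v : E) : ℝ := φ (c • v) * divergence g v + c * fderiv ℝ φ (c • v) (g v)
  have D_measurable (c : ℝ) : AEStronglyMeasurable (D c) μ := by
    have hcont : Continuous fun v => c * fderiv ℝ φ (c • v) (g v) := by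
      have := hg.continuous
      fun_prop
    exact ((φ.continuous.comp (continuous_const_smul c)).aestronglyMeasurable.mul hdiv.1).add
      hcont.aestronglyMeasurable
  have D_bound {c : ℝ} (hc : |c| ≤ 1) (v : E) : ‖D c v‖ ≤ ‖divergence g v‖ + C * ‖g v‖ := by
    refine norm_add_le_of_le ?_ ?_
    · rw [norm_mul, Real.norm_of_nonneg φ.nonneg]
      exact mul_le_of_le_one_left (norm_nonneg _) φ.le_one
    · rw [norm_mul]
      exact (mul_le_of_le_one_left (norm_nonneg _) hc).trans
        (ContinuousLinearMap.le_of_opNorm_le _ (hC _) _)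
  have D_tendsto (v : E) : Tendsto (D · v) (𝓝[≠] 0) (𝓝 (divergence g v)) := by
    have hcont : Continuous (D · v) := by
      have := φ.continuous
      fun_prop
    have hφ0 : φ 0 = 1 := φ.one_of_mem_closedBall (by simp [φ])
    have hD0 : D 0 v = divergence g v := by simp [D, hφ0]
    exact hD0 ▸ (hcont.tendsto 0).mono_left nhdsWithin_le_nhds
  have small : ∀ᶠ c : ℝ in 𝓝[≠] 0, |c| ≤ 1 :=
    nhdsWithin_le_nhds (continuous_abs.continuousAt.eventually_le_const (by simp))
  have limit : Tendsto (fun c => ∫ v, D c v ∂μ) (𝓝[≠] 0) (𝓝 (∫ v, divergence g v ∂μ)) :=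
    tendsto_integral_filter_of_dominated_convergence _ (.of_forall D_measurable)
      (small.mono fun _ hc => .of_forall (D_bound hc)) (hdiv.norm.add (hi.norm.const_mul C))
      (.of_forall D_tendsto)
  refine tendsto_nhds_unique limit (tendsto_const_nhds.congr' ?_)
  filter_upwards [self_mem_nhdsWithin] with c hc
  exact (integral_cutoff_divergence_eq_zero hφ φ.hasCompactSupport hg hc).symm

end Divergence

section WeightedSquareIntegrable

variable {α F : Type*} [MeasurableSpace α] {μ : Measure α} [NormedAddCommGroup F]
  {p : α → ℝ} {f g : α → F}

lemma integrable_smul_of_integrable_mul_norm_sq [NormedSpace ℝ F] (hp : Integrable p μ)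
    (hp_nonneg : ∀ v, 0 ≤ p v) (hf : AEStronglyMeasurable f μ)
    (hf_sq : Integrable (fun v => p v * ‖f v‖ ^ 2) μ) : Integrable (fun v => p v • f v) μ := by
  refine (hp.add hf_sq).mono' (hp.1.smul hf) (.of_forall fun v => ?_)
  calc ‖p v • f v‖ = p v * ‖f v‖ := by rw [norm_smul, Real.norm_of_nonneg (hp_nonneg v)]
    _ ≤ p v * (1 + ‖f v‖ ^ 2) :=
      mul_le_mul_of_nonneg_left (by nlinarith [sq_nonneg (‖f v‖ - 1)]) (hp_nonneg v)
    _ = p v + p v * ‖f v‖ ^ 2 := by ring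

lemma integrable_mul_norm_sub_sq (hp : AEStronglyMeasurable p μ) (hp_nonneg : ∀ v, 0 ≤ p v)
    (hf : AEStronglyMeasurable f μ) (hg : AEStronglyMeasurable g μ)
    (hf_sq : Integrable (fun v => p v * ‖f v‖ ^ 2) μ)
    (hg_sq : Integrable (fun v => p v * ‖g v‖ ^ 2) μ) :
    Integrable (fun v => p v * ‖f v - g v‖ ^ 2) μ := by
  refine ((hf_sq.add hg_sq).const_mul 2).mono' (hp.mul ((hf.sub hg).norm.pow 2))
    (.of_forall fun v => ?_)
  calc ‖p v * ‖f v - g v‖ ^ 2‖ = p v * ‖f v - g v‖ ^ 2 :=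
      Real.norm_of_nonneg (mul_nonneg (hp_nonneg v) (sq_nonneg _))
    _ ≤ p v * (2 * (‖f v‖ ^ 2 + ‖g v‖ ^ 2)) :=
      mul_le_mul_of_nonneg_left
        ((pow_le_pow_left₀ (norm_nonneg _) (norm_sub_le _ _) 2).trans add_sq_le) (hp_nonneg v)
    _ = 2 * (p v * ‖f v‖ ^ 2 + p v * ‖g v‖ ^ 2) := by ring

end WeightedSquareIntegrable

section Score

variable {E : Type*} [NormedAddCommGroup E] [InnerProductSpace ℝ E] [CompleteSpace E]

/-- The score `∇ log p` of an unnormalised density `p`. -/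
noncomputable def score (p : E → ℝ) : E → E :=
  gradient fun w => Real.log (p w)

lemma mul_inner_score {p : E → ℝ} {v : E} (hp : DifferentiableAt ℝ p v) (hpv : p v ≠ 0) (w : E) :
    p v * ⟪score p v, w⟫ = fderiv ℝ p v w := by
  rw [score, ← InnerProductSpace.toDual_apply_apply (𝕜 := ℝ), toDual_gradient,
    (hp.hasFDerivAt.log hpv).fderiv, smul_apply, smul_eq_mul, mul_inv_cancel_left₀ hpv]

end Score

section FisherDivergence

variable {E : Type*} [NormedAddCommGroup E] [InnerProductSpace ℝ E] [FiniteDimensional ℝ E]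
  {p : E → ℝ} {b f : E → E}

lemma mul_inner_add_divergence_sub_eq {v : E} (hp : DifferentiableAt ℝ p v) (hpv : p v ≠ 0)
    (hf : DifferentiableAt ℝ f v) :
    p v * (⟪b v, f v⟫ + divergence f v - (1 / 2) * ‖f v‖ ^ 2) =
      divergence (fun w => p w • f w) v + ((1 / 2) * (p v * ‖b v - score p v‖ ^ 2) -
        (1 / 2) * (p v * ‖(b v - score p v) - f v‖ ^ 2)) := by
  rw [divergence_smul hp hf, ← mul_inner_score hp hpv, norm_sub_sq_real (b v - score p v) (f v),
    inner_sub_left]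
  ring

variable [MeasurableSpace E]

/-- The Fisher divergence of the density `p` from a model whose score is `b`. The model enters
through its score alone, so `b` is allowed to be any vector field. -/
noncomputable def fisherDivergence (μ : Measure E) (p : E → ℝ) (b : E → E) : ℝ :=
  (1 / 2) * ∫ v, p v * ‖b v - score p v‖ ^ 2 ∂μ

/-- The functional whose supremum is the maximum form of the Fisher divergence, for a model with
score `b`. It agrees definitionally with `Jobj` on `ℝ^d` when `b = ∇ log p_θ`. -/
noncomputable def fisherObjective (μ : Measure E) (p : E → ℝ) (b f : E → E) : ℝ :=
  ∫ v, p v * (⟪b v, f v⟫ + divergence f v - (1 / 2) * ‖f v‖ ^ 2) ∂μ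

/-- Test fields for the maximum form of the Fisher divergence: `memF` without decay at infinity. -/
structure IsTestField (μ : Measure E) (p : E → ℝ) (f : E → E) : Prop where
  contDiff : ContDiff ℝ 1 f
  integrable_divergence : Integrable (divergence fun v => p v • f v) μ
  integrable_mul_norm_sq : Integrable (fun v => p v * ‖f v‖ ^ 2) μ

lemma memF.isTestField {d : ℕ} {p : EuclideanSpace ℝ (Fin d) → ℝ}
    {f : EuclideanSpace ℝ (Fin d) → EuclideanSpace ℝ (Fin d)} (hf : memF p f) :
    IsTestField volume p f :=
  ⟨hf.1, hf.2.2.1, hf.2.2.2⟩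

variable [BorelSpace E] {μ : Measure E} [μ.IsAddHaarMeasure]

lemma fisherObjective_eq_fisherDivergence_sub (hp : ContDiff ℝ 1 p) (hp_pos : ∀ v, 0 < p v)
    (hp_int : Integrable p μ) (hf : IsTestField μ p f)
    (hs : AEStronglyMeasurable (fun v => b v - score p v) μ)
    (hs_sq : Integrable (fun v => p v * ‖b v - score p v‖ ^ 2) μ) :
    fisherObjective μ p b f = fisherDivergence μ p b -
      (1 / 2) * ∫ v, p v * ‖(b v - score p v) - f v‖ ^ 2 ∂μ := by
  have hp_nonneg (v : E) : 0 ≤ p v := (hp_pos v).le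
  have hf_meas : AEStronglyMeasurable f μ := hf.contDiff.continuous.aestronglyMeasurable
  have integral_div : ∫ v, divergence (fun w => p w • f w) v ∂μ = 0 :=
    integral_divergence_eq_zero (hp.smul hf.contDiff)
      (integrable_smul_of_integrable_mul_norm_sq hp_int hp_nonneg hf_meas
        hf.integrable_mul_norm_sq) hf.integrable_divergence
  have hsub_sq := integrable_mul_norm_sub_sq hp_int.1 hp_nonneg hs hf_meas hs_sq
    hf.integrable_mul_norm_sq
  have hs_half := hs_sq.const_mul (1 / 2)
  have hsub_half := hsub_sq.const_mul (1 / 2)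
  calc fisherObjective μ p b f
      = ∫ v, (divergence (fun w => p w • f w) v + ((1 / 2) * (p v * ‖b v - score p v‖ ^ 2) -
          (1 / 2) * (p v * ‖(b v - score p v) - f v‖ ^ 2))) ∂μ :=
        integral_congr_ae (.of_forall fun v => mul_inner_add_divergence_sub_eq
          (hp.differentiable one_ne_zero v) (hp_pos v).ne'
          (hf.contDiff.differentiable one_ne_zero v))
    _ = ∫ v, ((1 / 2) * (p v * ‖b v - score p v‖ ^ 2) -
          (1 / 2) * (p v * ‖(b v - score p v) - f v‖ ^ 2)) ∂μ := by
        rw [integral_add hf.integrable_divergence (by exact hs_half.sub hsub_half), integral_div,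
          zero_add]
    _ = fisherDivergence μ p b - (1 / 2) * ∫ v, p v * ‖(b v - score p v) - f v‖ ^ 2 ∂μ := by
        rw [integral_sub hs_half hsub_half, integral_const_mul, integral_const_mul,
          fisherDivergence]

theorem maxFisher_eq_fisher_general {𝓕 : Set (E → E)} (hp : ContDiff ℝ 1 p)
    (hp_pos : ∀ v, 0 < p v) (hp_int : Integrable p μ) (h𝓕 : ∀ f ∈ 𝓕, IsTestField μ p f)
    (hstar : (fun v => b v - score p v) ∈ 𝓕) :
    fisherObjective μ p b (fun v => b v - score p v) = fisherDivergence μ p b ∧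
      IsGreatest {r | ∃ f ∈ 𝓕, r = fisherObjective μ p b f} (fisherDivergence μ p b) := by
  have hs := h𝓕 _ hstar
  have complete_square {f : E → E} (hf : f ∈ 𝓕) : fisherObjective μ p b f =
      fisherDivergence μ p b - (1 / 2) * ∫ v, p v * ‖(b v - score p v) - f v‖ ^ 2 ∂μ :=
    fisherObjective_eq_fisherDivergence_sub hp hp_pos hp_int (h𝓕 f hf)
      hs.contDiff.continuous.aestronglyMeasurable hs.integrable_mul_norm_sq
  have attained : fisherObjective μ p b (fun v => b v - score p v) = fisherDivergence μ p b := by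
    simp [complete_square hstar]
  refine ⟨attained, ⟨_, hstar, attained.symm⟩, ?_⟩
  rintro _ ⟨f, hf, rfl⟩
  rw [complete_square hf]
  exact sub_le_self _ (mul_nonneg one_half_pos.le
    (integral_nonneg fun v => mul_nonneg (hp_pos v).le (sq_nonneg _)))

end FisherDivergence

/-- **The maximum form of the Fisher divergence equals the Fisher divergence.** If
`f* = ∇ log p_θ − ∇ log p_D` belongs to the class `F`, then
`sup_{f ∈ F} J(f) = ½ ∫ p_D ‖∇ log p_θ − ∇ log p_D‖²` and the supremum is attained at `f*`. -/
theorem maxFisher_eq_fisher {d : ℕ} (pD pθ : EuclideanSpace ℝ (Fin d) → ℝ)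
    (hD : ContDiff ℝ 1 pD) (hDpos : ∀ v, 0 < pD v) (hDnorm : ∫ v, pD v = 1)
    (hθ : ContDiff ℝ 1 pθ) (hθpos : ∀ v, 0 < pθ v) (hθnorm : ∫ v, pθ v = 1)
    (hfin : Integrable (fun v => pD v *
      ‖gradient (fun w => Real.log (pθ w)) v - gradient (fun w => Real.log (pD w)) v‖ ^ 2))
    (hstar : memF pD (fun v =>
      gradient (fun w => Real.log (pθ w)) v - gradient (fun w => Real.log (pD w)) v)) :
    Jobj pD pθ (fun v =>
        gradient (fun w => Real.log (pθ w)) v - gradient (fun w => Real.log (pD w)) v)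
      = (1 / 2) * ∫ v, pD v *
          ‖gradient (fun w => Real.log (pθ w)) v - gradient (fun w => Real.log (pD w)) v‖ ^ 2
    ∧ IsGreatest {r : ℝ | ∃ f, memF pD f ∧ r = Jobj pD pθ f}
        ((1 / 2) * ∫ v, pD v *
          ‖gradient (fun w => Real.log (pθ w)) v
            - gradient (fun w => Real.log (pD w)) v‖ ^ 2) := by
  exact maxFisher_eq_fisher_general (b := score pθ) (𝓕 := {f | memF pD f}) hD hDpos
    (.of_integral_ne_zero (hDnorm ▸ one_ne_zero)) (fun _ => memF.isTestField) hstar
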